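/- (Corollary 4.6, second identity.) In U(gl(m,ℂ)), for every q ≥ 0, c̃_q = (−1)^q · Σ_{p=0}^q binom(q,p)·(−m)^{q−p}·K_{p+1}(−c). -/

import Mathlib

open Finset

attribute [local instance 100] LieRing.ofAssociativeRing

/-- `gl(m, ℂ)`: the Lie algebra of `m × m` complex matrices. -/
abbrev glm (m : ℕ) := Matrix (Fin m) (Fin m) ℂ

/-- The universal enveloping algebra `U(gl(m,ℂ))`. -/
abbrev UEA (m : ℕ) := UniversalEnvelopingAlgebra ℂ (glm m)

/-- The image of the matrix unit `e_{kl}` in `U(gl(m,ℂ))`. -/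
noncomputable def E {m : ℕ} (k l : Fin m) : UEA m :=
  UniversalEnvelopingAlgebra.ι ℂ (Matrix.single k l (1 : ℂ))

/-- `e_{kl}^q`, defined by `e_{kl}^0 = δ_{kl}` and `e_{kl}^{q+1} = Σ_i e_{ki} e_{il}^q`. -/
noncomputable def Epow {m : ℕ} : ℕ → Fin m → Fin m → UEA m
  | 0, k, l => if k = l then 1 else 0
  | q + 1, k, l => ∑ i, E k i * Epow q i l

/-- `ẽ_{kl}^q`, defined by `ẽ_{kl}^0 = δ_{kl}` and `ẽ_{kl}^{q+1} = −Σ_i e_{ik} ẽ_{il}^q`. -/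
noncomputable def Etil {m : ℕ} : ℕ → Fin m → Fin m → UEA m
  | 0, k, l => if k = l then 1 else 0
  | q + 1, k, l => -∑ i, E i k * Etil q i l

/-- The Casimir element `c_q = Σ_k e_{kk}^q`. -/
noncomputable def Cas (m : ℕ) (q : ℕ) : UEA m := ∑ k : Fin m, Epow q k k

/-- The Casimir element `c̃_q = Σ_k ẽ_{kk}^q`. -/
noncomputable def CasT (m : ℕ) (q : ℕ) : UEA m := ∑ k : Fin m, Etil q k k

/-- `K_n(−c) ∈ U(gl(m,ℂ))`: `K_0(−c) = 1` and `K_n(−c) = Σ_{p=0}^{n−1} K_p(−c)·c_{n−1−p}`. -/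
noncomputable def Kc (m : ℕ) : ℕ → UEA m
  | 0 => 1
  | n + 1 => ∑ p ∈ (Finset.range (n + 1)).attach, Kc m p.1 * Cas m (n - p.1)
  decreasing_by exact Finset.mem_range.mp p.2

/-!
A matrix `X` over a ring satisfies the commutation relations of `gl` exactly when it commutes with
each matrix `X_{ij} • 1 - e_{ji}`; hence so do its powers, which makes the traces `c_q = tr X^q`
commute with the entries of `X`. Reordering the factors in the transpose of `X^(q+1) = X * X^q`
yields `(X^(q+1))ᵀ = (X^q)ᵀ * F - c_q`, where `F = Xᵀ + N` and `N` is the size of `X`. Solving for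
the powers of `F` and taking traces, `tr F^q` obeys the recursion that defines `K_{q+1}(-c)`. As
`-Xᵀ = -(F - N)`, the identity is the trace of the binomial expansion of `(F - N)^q`.
-/

theorem add_algebraMap_pow {R B : Type*} [CommSemiring R] [Semiring B] [Algebra R B] (x : B)
    (r : R) (q : ℕ) :
    (x + algebraMap R B r) ^ q =
      ∑ p ∈ range (q + 1), ((q.choose p : R) * r ^ (q - p)) • x ^ p := by
  rw [(Algebra.commute_algebraMap_right r x).add_pow]
  refine sum_congr rfl fun p _ => ?_
  rw [Algebra.smul_def, Algebra.commutes, map_mul, map_natCast, map_pow, mul_assoc, Nat.cast_comm]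

theorem single_one_mul_single_one {n R : Type*} [Fintype n] [DecidableEq n]
    [NonAssocSemiring R] (i j k l : n) :
    Matrix.single i j (1 : R) * Matrix.single k l 1 = if j = k then Matrix.single i l 1 else 0 := by
  split_ifs with h
  · rw [h, Matrix.single_mul_single_same, mul_one]
  · exact Matrix.single_mul_single_of_ne _ _ _ _ h _

theorem commute_pow_apply {n A : Type*} [Fintype n] [DecidableEq n] [Semiring A] {c : A}
    {M : Matrix n n A} (h : ∀ i j, Commute c (M i j)) (q : ℕ) (i j : n) :
    Commute c ((M ^ q) i j) := by
  have scalar_commute_iff (P : Matrix n n A) :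
      Commute (Matrix.scalar n c) P ↔ ∀ i j, Commute c (P i j) := by
    simp only [commute_iff_eq, ← Matrix.ext_iff, Matrix.scalar_apply, Matrix.diagonal_mul,
      Matrix.mul_diagonal]
  exact (scalar_commute_iff _).mp (((scalar_commute_iff M).mpr h).pow_right q) i j

/-- The entries of `X` satisfy the commutation relations of the matrix units of `gl`, that is,
`[X_{ij}, X_{kl}] = δ_{jk} X_{il} - δ_{il} X_{kj}`. -/
def SatisfiesGLRelations {n A : Type*} [DecidableEq n] [Ring A] (X : Matrix n n A) : Prop :=
  ∀ i j k l, ⁅X i j, X k l⁆ = (if j = k then X i l else 0) - (if i = l then X k j else 0)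

section GLRelations

open scoped Matrix

variable {n A : Type*} [Fintype n] [DecidableEq n] [Ring A]

theorem commute_scalar_sub_single_iff {x : A} {i j : n} {M : Matrix n n A} :
    Commute (Matrix.scalar n x - Matrix.single j i 1) M ↔
      ∀ k l, ⁅x, M k l⁆ = (if j = k then M i l else 0) - (if i = l then M k j else 0) := by
  have single_mul_apply (k l : n) :
      (Matrix.single j i (1 : A) * M) k l = if j = k then M i l else 0 := by
    simp [Matrix.mul_apply, Matrix.single_apply, ite_and]
  have mul_single_apply (k l : n) :
      (M * Matrix.single j i (1 : A)) k l = if i = l then M k j else 0 := by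
    simp [Matrix.mul_apply, Matrix.single_apply, ite_and]
  rw [commute_iff_eq, ← Matrix.ext_iff]
  refine forall₂_congr fun k l => ?_
  simp only [sub_mul, mul_sub, Matrix.sub_apply, single_mul_apply, mul_single_apply,
    Matrix.scalar_apply, Matrix.diagonal_mul, Matrix.mul_diagonal, Ring.lie_def]
  rw [sub_eq_sub_iff_sub_eq_sub]

/-- The matrix `F = Xᵀ + N`, where `N` is the size of `X`; the traces of its powers turn out to be
the elements `K_{q+1}(-c)`. -/
def shiftedTranspose (X : Matrix n n A) : Matrix n n A :=
  Xᵀ + (Fintype.card n : Matrix n n A)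

namespace SatisfiesGLRelations

variable {X : Matrix n n A}

theorem lie_pow_apply (hX : SatisfiesGLRelations X) (q : ℕ) (i j k l : n) :
    ⁅X i j, (X ^ q) k l⁆ =
      (if j = k then (X ^ q) i l else 0) - (if i = l then (X ^ q) k j else 0) :=
  commute_scalar_sub_single_iff.mp
    ((commute_scalar_sub_single_iff.mpr (hX i j)).pow_right q) k l

theorem commute_trace_pow (hX : SatisfiesGLRelations X) (q : ℕ) (i j : n) :
    Commute (X ^ q).trace (X i j) := by
  have lie_trace : ⁅X i j, (X ^ q).trace⁆ = 0 := by
    simp [Matrix.trace, lie_sum, hX.lie_pow_apply]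
  exact (commute_iff_lie_eq.mpr lie_trace).symm

theorem transpose_pow_succ (hX : SatisfiesGLRelations X) (q : ℕ) :
    (X ^ (q + 1))ᵀ = (X ^ q)ᵀ * shiftedTranspose X - (X ^ q).trace • 1 := by
  ext k l
  have swap (i : n) : X l i * (X ^ q) i k = (X ^ q) i k * X l i +
      ((X ^ q) l k - if l = k then (X ^ q) i i else 0) := by
    rw [← sub_eq_iff_eq_add', ← Ring.lie_def, hX.lie_pow_apply, if_pos rfl]
  calc (X ^ (q + 1))ᵀ k l
      = ∑ i, X l i * (X ^ q) i k := by
        rw [Matrix.transpose_apply, pow_succ', Matrix.mul_apply]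
    _ = ∑ i, (X ^ q) i k * X l i +
          (Fintype.card n • (X ^ q) l k - if l = k then (X ^ q).trace else 0) := by
        simp only [swap, sum_add_distrib, sum_sub_distrib, sum_const, card_univ, sum_ite_irrel,
          smul_zero, Matrix.trace, Matrix.diag_apply]
    _ = ((X ^ q)ᵀ * shiftedTranspose X - (X ^ q).trace • 1) k l := by
        rw [shiftedTranspose, mul_add, ← nsmul_eq_mul']
        simp [-nsmul_eq_mul, Matrix.mul_apply, Matrix.one_apply, eq_comm (a := k), add_sub_assoc]

theorem shiftedTranspose_pow (hX : SatisfiesGLRelations X) (q : ℕ) :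
    shiftedTranspose X ^ q =
      (X ^ q)ᵀ + ∑ p ∈ range q, (X ^ (q - (p + 1))).trace • shiftedTranspose X ^ p := by
  induction q with
  | zero => simp
  | succ q ih =>
    rw [sum_range_succ', pow_succ, ih, add_mul, sum_mul, hX.transpose_pow_succ]
    simp only [Matrix.smul_mul, ← pow_succ, Nat.add_sub_add_right, zero_add,
      pow_zero, add_tsub_cancel_right]
    abel

theorem commute_trace_pow_trace_shiftedTranspose_pow (hX : SatisfiesGLRelations X) (q p : ℕ) :
    Commute (X ^ q).trace (shiftedTranspose X ^ p).trace := by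
  have commute_apply (i j : n) : Commute (X ^ q).trace (shiftedTranspose X i j) := by
    rw [shiftedTranspose, Matrix.add_apply, Matrix.natCast_apply]
    exact (hX.commute_trace_pow q j i).add_right (Nat.commute_cast _ _)
  exact Commute.sum_right _ _ _ fun i _ => commute_pow_apply commute_apply p i i

theorem trace_shiftedTranspose_pow (hX : SatisfiesGLRelations X) (q : ℕ) :
    (shiftedTranspose X ^ q).trace = (X ^ q).trace +
      ∑ p ∈ range q, (shiftedTranspose X ^ p).trace * (X ^ (q - (p + 1))).trace := by
  conv_lhs => rw [hX.shiftedTranspose_pow, Matrix.trace_add, Matrix.trace_transpose,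
    Matrix.trace_sum]
  simp only [Matrix.trace_smul, smul_eq_mul,
    (hX.commute_trace_pow_trace_shiftedTranspose_pow _ _).eq]

theorem eq_trace_shiftedTranspose_pow (hX : SatisfiesGLRelations X) {K : ℕ → A} (hK₀ : K 0 = 1)
    (hK : ∀ q, K (q + 1) = ∑ p ∈ range (q + 1), K p * (X ^ (q - p)).trace) (q : ℕ) :
    K (q + 1) = (shiftedTranspose X ^ q).trace := by
  induction q using Nat.strong_induction_on with
  | _ q ih =>
    rw [hK, sum_range_succ', hK₀, one_mul, Nat.sub_zero, add_comm, hX.trace_shiftedTranspose_pow]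
    congr 1
    exact sum_congr rfl fun p hp => by rw [ih p (mem_range.mp hp)]

end SatisfiesGLRelations

theorem statement16_general {R : Type*} [CommRing R] [Algebra R A] {X : Matrix n n A}
    (hX : SatisfiesGLRelations X) {K : ℕ → A} (hK₀ : K 0 = 1)
    (hK : ∀ q, K (q + 1) = ∑ p ∈ range (q + 1), K p * (X ^ (q - p)).trace) (q : ℕ) :
    ((-Xᵀ) ^ q).trace = (-1 : R) ^ q •
      ∑ p ∈ range (q + 1),
        ((q.choose p : R) * (-(Fintype.card n : R)) ^ (q - p)) • K (p + 1) := by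
  have neg_transpose : -Xᵀ = (-1 : R) •
      (shiftedTranspose X + algebraMap R (Matrix n n A) (-(Fintype.card n : R))) := by
    simp [shiftedTranspose]
  rw [neg_transpose, smul_pow, add_algebraMap_pow, Matrix.trace_smul, Matrix.trace_sum]
  simp only [Matrix.trace_smul, hX.eq_trace_shiftedTranspose_pow hK₀ hK]

end GLRelations

section GeneratorMatrix

open scoped Matrix

variable (m : ℕ)

/-- The matrix over `U(gl(m,ℂ))` whose `(k, l)` entry is the generator `e_{kl}`. -/
noncomputable def generatorMatrix : Matrix (Fin m) (Fin m) (UEA m) :=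
  Matrix.of E

theorem satisfiesGLRelations_generatorMatrix : SatisfiesGLRelations (generatorMatrix m) := by
  intro i j k l
  have lie_single : ⁅Matrix.single i j (1 : ℂ), Matrix.single k l (1 : ℂ)⁆ =
      (if j = k then Matrix.single i l 1 else 0) -
        (if i = l then Matrix.single k j 1 else 0) := by
    rw [Ring.lie_def, single_one_mul_single_one, single_one_mul_single_one]
    simp only [eq_comm (a := l)]
  simp only [generatorMatrix, Matrix.of_apply, E]
  rw [← LieHom.map_lie, lie_single, map_sub, apply_ite (UniversalEnvelopingAlgebra.ι ℂ),
    apply_ite (UniversalEnvelopingAlgebra.ι ℂ), map_zero]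

theorem of_Epow (q : ℕ) : Matrix.of (Epow q) = generatorMatrix m ^ q := by
  induction q with
  | zero => rfl
  | succ q ih =>
    rw [pow_succ', ← ih]
    rfl

theorem of_Etil (q : ℕ) : Matrix.of (Etil q) = (-(generatorMatrix m)ᵀ) ^ q := by
  induction q with
  | zero => rfl
  | succ q ih =>
    rw [pow_succ', ← ih, neg_mul]
    rfl

theorem Cas_eq_trace (q : ℕ) : Cas m q = (generatorMatrix m ^ q).trace := by
  rw [← of_Epow]
  rfl

theorem CasT_eq_trace (q : ℕ) : CasT m q = ((-(generatorMatrix m)ᵀ) ^ q).trace := by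
  rw [← of_Etil]
  rfl

theorem Kc_zero : Kc m 0 = 1 := by
  rw [Kc]

theorem Kc_succ (q : ℕ) :
    Kc m (q + 1) = ∑ p ∈ range (q + 1), Kc m p * (generatorMatrix m ^ (q - p)).trace := by
  simp only [← Cas_eq_trace]
  rw [Kc]
  exact sum_attach (range (q + 1)) fun p => Kc m p * Cas m (q - p)

end GeneratorMatrix

/-- Corollary 4.6, second identity:
`c̃_q = (−1)^q Σ_{p=0}^q C(q,p) (−m)^{q−p} K_{p+1}(−c)`. -/
theorem statement16 (m : ℕ) (hm : 1 ≤ m) (q : ℕ) :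
    CasT m q = (-1 : ℂ) ^ q •
      ∑ p ∈ Finset.range (q + 1),
        ((q.choose p : ℂ) * (-(m : ℂ)) ^ (q - p)) • Kc m (p + 1) := by
  simpa only [CasT_eq_trace, Fintype.card_fin] using statement16_general (R := ℂ)
    (satisfiesGLRelations_generatorMatrix m) (Kc_zero m) (Kc_succ m) q
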